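/- Let n ≥ 2. The identity 'for every skew-symmetric n×n complex matrix X, the trace of (ad X)⁶ on 𝔰𝔬(n,ℂ) equals 15·Tr(X²)·Tr(X⁴)' holds if and only if n = 32. -/

import Mathlib

open Matrix

noncomputable section

/-- The adjoint action `ad X : Y ↦ X·Y − Y·X` as a linear endomorphism of the matrix space. -/
def adM {m : Type*} [Fintype m] [DecidableEq m] (X : Matrix m m ℂ) :
    Module.End ℂ (Matrix m m ℂ) :=
  LinearMap.mulLeft ℂ X - LinearMap.mulRight ℂ X

theorem adM_apply {m : Type*} [Fintype m] [DecidableEq m] (X Y : Matrix m m ℂ) :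
    adM X Y = X * Y - Y * X := rfl

/-- The subspace `𝔰𝔬(n,ℂ)` of skew-symmetric `n×n` complex matrices. -/
def soSub (n : ℕ) : Submodule ℂ (Matrix (Fin n) (Fin n) ℂ) where
  carrier := {Y | Yᵀ = -Y}
  add_mem' := by
    intro a b ha hb
    simp only [Set.mem_setOf_eq] at *
    rw [Matrix.transpose_add, ha, hb, neg_add]
  zero_mem' := by simp
  smul_mem' := by
    intro c a ha
    simp only [Set.mem_setOf_eq] at *
    rw [Matrix.transpose_smul, ha, smul_neg]

/-- For skew-symmetric `X`, `ad X` preserves `𝔰𝔬(n,ℂ)`. -/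
theorem adM_mem_so {n : ℕ} {X : Matrix (Fin n) (Fin n) ℂ} (hX : Xᵀ = -X) :
    ∀ Y ∈ soSub n, adM X Y ∈ soSub n := by
  intro Y hY
  have hY' : Yᵀ = -Y := hY
  show (adM X Y)ᵀ = -(adM X Y)
  rw [adM_apply, Matrix.transpose_sub, Matrix.transpose_mul, Matrix.transpose_mul, hX, hY']
  simp [Matrix.neg_mul, Matrix.mul_neg, neg_sub]

/-! For a skew-symmetric matrix `X`, the endomorphism `(ad X)ᵏ` of all `n × n` matrices is a
combination of the maps `Y ↦ XᵖYX^q` with `p + q = k`. Its trace on skew-symmetric matrices is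
the trace of its composite with the projection `Y ↦ (Y - Yᵀ) / 2`, where `Y ↦ AYB` has trace
`Tr A · Tr B` and `Y ↦ AYᵀB` has trace `Tr (ABᵀ)`. Since odd powers of `X` are traceless, `k = 6`
gives `(n - 32) Tr X⁶ + 15 Tr X² Tr X⁴`, and the generator of rotations of a coordinate plane has
`Tr X⁶ = -2`. -/

open Finset.HasAntidiagonal

section MatrixEndomorphisms

variable {R m n : Type*} [CommRing R] [Fintype m] [Fintype n]

theorem trace_end_matrix_eq_sum [DecidableEq m] [DecidableEq n]
    (f : Module.End R (Matrix m n R)) :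
    LinearMap.trace R _ f = ∑ i, ∑ j, f (single i j 1) i j := by
  rw [LinearMap.trace_eq_matrix_trace R (stdBasis R m n), Matrix.trace, Fintype.sum_prod_type]
  simp only [diag_apply, LinearMap.toMatrix_apply, stdBasis_eq_single]
  rfl

theorem trace_mulLeftLinearMap_comp_mulRightLinearMap (A : Matrix m m R) (B : Matrix n n R) :
    LinearMap.trace R _ (mulLeftLinearMap n R A ∘ₗ mulRightLinearMap m R B) =
      A.trace * B.trace := by
  classical
  rw [trace_end_matrix_eq_sum, Matrix.trace, Matrix.trace, Finset.sum_mul_sum]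
  simp [mul_apply, single_apply, ite_and]

theorem trace_mulLeftLinearMap_comp_mulRightLinearMap_comp_transpose (A B : Matrix m n R) :
    LinearMap.trace R _ ((mulLeftLinearMap n R A ∘ₗ mulRightLinearMap n R B) ∘ₗ
      (transposeLinearEquiv m n R R).toLinearMap) = (A * Bᵀ).trace := by
  classical
  rw [trace_end_matrix_eq_sum, Matrix.trace]
  simp [mul_apply, single_apply, ite_and]

end MatrixEndomorphisms

theorem mulLeft_sub_mulRight_pow {R A : Type*} [CommRing R] [Ring A] [Algebra R A] (a b : A)
    (k : ℕ) :
    (LinearMap.mulLeft R a - LinearMap.mulRight R b) ^ k =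
      ∑ p ∈ antidiagonal k, ((-1) ^ p.2 * k.choose p.1 : R) •
        (LinearMap.mulLeft R (a ^ p.1) ∘ₗ LinearMap.mulRight R (b ^ p.2)) := by
  have hcomm : Commute (LinearMap.mulLeft R a) (-LinearMap.mulRight R b) :=
    (LinearMap.commute_mulLeft_right (R := R) a b).neg_right
  rw [sub_eq_add_neg, hcomm.add_pow']
  refine Finset.sum_congr rfl fun p _ => ?_
  rw [← neg_one_smul R (LinearMap.mulRight R b), smul_pow, LinearMap.pow_mulLeft,
    LinearMap.pow_mulRight, mul_smul_comm, ← Nat.cast_smul_eq_nsmul R, smul_smul, mul_comm,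
    Module.End.mul_eq_comp]

section SkewSymmetric

variable {R m : Type*} [CommRing R] [Fintype m] [DecidableEq m]

theorem trace_mulLeft_sub_mulRight_pow (A B : Matrix m m R) (k : ℕ) :
    LinearMap.trace R _ ((LinearMap.mulLeft R A - LinearMap.mulRight R B) ^ k) =
      ∑ p ∈ antidiagonal k,
        (-1) ^ p.2 * k.choose p.1 * ((A ^ p.1).trace * (B ^ p.2).trace) := by
  rw [mulLeft_sub_mulRight_pow]
  simp only [map_sum, map_smul, smul_eq_mul, ← mulLeftLinearMap_eq_mulLeft,
    ← mulRightLinearMap_eq_mulRight, trace_mulLeftLinearMap_comp_mulRightLinearMap]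

theorem transpose_pow_of_transpose_eq_neg {X : Matrix m m R} (hX : Xᵀ = -X) (k : ℕ) :
    (X ^ k)ᵀ = (-1 : R) ^ k • X ^ k := by
  rw [transpose_pow, hX, ← neg_one_smul R X, smul_pow]

theorem trace_pow_eq_zero_of_transpose_eq_neg [IsAddTorsionFree R]
    {X : Matrix m m R} (hX : Xᵀ = -X) {k : ℕ} (hk : Odd k) : (X ^ k).trace = 0 := by
  refine self_eq_neg.mp ?_
  calc (X ^ k).trace = (X ^ k)ᵀ.trace := (trace_transpose _).symm
    _ = -(X ^ k).trace := by
      rw [transpose_pow_of_transpose_eq_neg hX, hk.neg_one_pow, neg_one_smul, trace_neg]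

theorem trace_mulLeft_sub_mulRight_pow_comp_transpose {X : Matrix m m R} (hX : Xᵀ = -X)
    (k : ℕ) :
    LinearMap.trace R _ (((LinearMap.mulLeft R X - LinearMap.mulRight R X) ^ k) ∘ₗ
      (transposeLinearEquiv m m R R).toLinearMap) = 2 ^ k * (X ^ k).trace := by
  -- The sign of each binomial term cancels the sign of the transposed power of `X`.
  have hterm : ∀ p ∈ antidiagonal k,
      (-1) ^ p.2 * k.choose p.1 * (X ^ p.1 * (X ^ p.2)ᵀ).trace =
        (k.choose p.1 : R) * (X ^ k).trace := by
    intro p hp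
    have hsign : (-1 : R) ^ p.2 * (-1) ^ p.2 = 1 := by simp [← mul_pow]
    rw [transpose_pow_of_transpose_eq_neg hX, mul_smul_comm, ← pow_add, mem_antidiagonal.mp hp,
      trace_smul, smul_eq_mul]
    linear_combination (k.choose p.1 * (X ^ k).trace) * hsign
  have hsum : ∑ p ∈ antidiagonal k, (k.choose p.1 : R) = 2 ^ k := by
    simpa [one_add_one_eq_two] using ((Commute.one_left (1 : R)).add_pow' k).symm
  rw [mulLeft_sub_mulRight_pow, ← Module.End.mul_eq_comp, Finset.sum_mul]
  simp only [smul_mul_assoc, Module.End.mul_eq_comp, map_sum, map_smul, smul_eq_mul,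
    ← mulLeftLinearMap_eq_mulLeft, ← mulRightLinearMap_eq_mulRight,
    trace_mulLeftLinearMap_comp_mulRightLinearMap_comp_transpose]
  rw [Finset.sum_congr rfl hterm, ← Finset.sum_mul, hsum]

end SkewSymmetric

theorem trace_restrict_eq_trace_comp_of_isProj {R M : Type*} [CommRing R] [AddCommGroup M]
    [Module R M] [Module.Free R M] [Module.Finite R M] {p : Submodule R M} [Module.Free R p]
    [Module.Finite R p] {f π : Module.End R M} (hf : ∀ x ∈ p, f x ∈ p)
    (hπ : LinearMap.IsProj p π) :
    LinearMap.trace R p (f.restrict hf) = LinearMap.trace R M (f ∘ₗ π) :=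
  calc LinearMap.trace R p (f.restrict hf)
    _ = LinearMap.trace R p ((f.restrict hf ∘ₗ hπ.codRestrict) ∘ₗ p.subtype) := by
      congr 1
      ext x
      simp
    _ = LinearMap.trace R M (p.subtype ∘ₗ f.restrict hf ∘ₗ hπ.codRestrict) :=
      LinearMap.trace_comp_comm' _ _
    _ = LinearMap.trace R M (f ∘ₗ π) := rfl

/-- The projection `Y ↦ (Y - Yᵀ) / 2` of square matrices onto the skew-symmetric ones, as a linear
endomorphism of the full matrix space; in characteristic two it is zero, since then `2⁻¹ = 0`. -/
def skewPart (K m : Type*) [Field K] : Module.End K (Matrix m m K) :=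
  (2⁻¹ : K) • (LinearMap.id - (transposeLinearEquiv m m K K).toLinearMap)

theorem skewPart_apply {K m : Type*} [Field K] (Y : Matrix m m K) :
    skewPart K m Y = (2⁻¹ : K) • (Y - Yᵀ) := rfl

theorem isProj_soSub_skewPart (n : ℕ) : LinearMap.IsProj (soSub n) (skewPart ℂ (Fin n)) where
  map_mem Y := by
    change (skewPart ℂ (Fin n) Y)ᵀ = -skewPart ℂ (Fin n) Y
    simp [skewPart_apply, ← smul_neg]
  map_id Y hY := by
    have hY : Yᵀ = -Y := hY
    rw [skewPart_apply, hY, sub_neg_eq_add, ← two_smul ℂ, inv_smul_smul₀ two_ne_zero]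

theorem trace_restrict_soSub {n : ℕ} {f : Module.End ℂ (Matrix (Fin n) (Fin n) ℂ)}
    (hf : ∀ Y ∈ soSub n, f Y ∈ soSub n) :
    LinearMap.trace ℂ (soSub n) (f.restrict hf) =
      (LinearMap.trace ℂ _ f -
        LinearMap.trace ℂ _ (f ∘ₗ (transposeLinearEquiv (Fin n) (Fin n) ℂ ℂ).toLinearMap)) / 2 := by
  rw [trace_restrict_eq_trace_comp_of_isProj hf (isProj_soSub_skewPart n), skewPart,
    LinearMap.comp_smul, LinearMap.comp_sub, LinearMap.comp_id, map_smul, map_sub, smul_eq_mul,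
    inv_mul_eq_div]

theorem trace_restrict_adM_pow {n : ℕ} {X : Matrix (Fin n) (Fin n) ℂ} (hX : Xᵀ = -X) (k : ℕ) :
    LinearMap.trace ℂ (soSub n) ((adM X).restrict (adM_mem_so hX) ^ k) =
      (∑ p ∈ antidiagonal k,
        (-1) ^ p.2 * k.choose p.1 * ((X ^ p.1).trace * (X ^ p.2).trace) -
          2 ^ k * (X ^ k).trace) / 2 := by
  rw [Module.End.pow_restrict, trace_restrict_soSub, adM, trace_mulLeft_sub_mulRight_pow,
    trace_mulLeft_sub_mulRight_pow_comp_transpose hX]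

theorem trace_restrict_adM_pow_six {n : ℕ} {X : Matrix (Fin n) (Fin n) ℂ} (hX : Xᵀ = -X) :
    LinearMap.trace ℂ (soSub n) ((adM X).restrict (adM_mem_so hX) ^ 6) =
      (n - 32) * (X ^ 6).trace + 15 * (X ^ 2).trace * (X ^ 4).trace := by
  have trace_odd {k : ℕ} (hk : Odd k) : (X ^ k).trace = 0 :=
    trace_pow_eq_zero_of_transpose_eq_neg hX hk
  rw [trace_restrict_adM_pow hX, Finset.Nat.sum_antidiagonal_eq_sum_range_succ_mk]
  simp only [Finset.sum_range_succ, Finset.sum_range_zero, Nat.reduceSub, Nat.choose,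
    pow_zero, trace_one, Fintype.card_fin, trace_odd (k := 1) (by decide),
    trace_odd (k := 3) (by decide), trace_odd (k := 5) (by decide)]
  push_cast
  ring

section RotationGenerator

variable {m : Type*} [DecidableEq m]

/-- The infinitesimal generator `Eᵢⱼ - Eⱼᵢ` of the rotations of the `(i, j)` coordinate plane. -/
def rotationGenerator (R : Type*) [Ring R] (i j : m) : Matrix m m R :=
  single i j 1 - single j i 1

variable {R : Type*} [Ring R]

theorem transpose_rotationGenerator (i j : m) :
    (rotationGenerator R i j)ᵀ = -rotationGenerator R i j := by
  simp [rotationGenerator]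

variable [Fintype m] {i j : m}

theorem rotationGenerator_sq (hij : i ≠ j) :
    rotationGenerator R i j ^ 2 = -(single i i 1 + single j j 1) := by
  simp only [rotationGenerator, pow_two, sub_mul, mul_sub, single_mul_single_same,
    single_mul_single_of_ne _ _ _ _ hij, single_mul_single_of_ne _ _ _ _ hij.symm, mul_one]
  abel

theorem rotationGenerator_pow_three (hij : i ≠ j) :
    rotationGenerator R i j ^ 3 = -rotationGenerator R i j := by
  rw [pow_succ, rotationGenerator_sq hij]
  simp only [rotationGenerator, neg_mul, add_mul, mul_sub, single_mul_single_same,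
    single_mul_single_of_ne _ _ _ _ hij, single_mul_single_of_ne _ _ _ _ hij.symm, mul_one]
  abel

theorem trace_rotationGenerator_pow_six (hij : i ≠ j) :
    (rotationGenerator R i j ^ 6).trace = -2 := by
  rw [pow_mul _ 3 2, rotationGenerator_pow_three hij, neg_sq, rotationGenerator_sq hij, trace_neg,
    trace_add, trace_single_eq_same, trace_single_eq_same, one_add_one_eq_two]

end RotationGenerator

/-- For `n ≥ 2`, the identity `Tr_ad((ad X)⁶) = 15·Tr(X²)·Tr(X⁴)` for all skew-symmetric
`X` holds if and only if `n = 32`. -/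
theorem so_sextic_identity_iff (n : ℕ) (hn : 2 ≤ n) :
    (∀ (X : Matrix (Fin n) (Fin n) ℂ) (hX : Xᵀ = -X),
        LinearMap.trace ℂ ↥(soSub n) (((adM X).restrict (adM_mem_so hX)) ^ 6)
          = 15 * (X ^ 2).trace * (X ^ 4).trace) ↔ n = 32 := by
  constructor
  · intro h
    have : Nontrivial (Fin n) := Fin.nontrivial_iff_two_le.2 hn
    obtain ⟨i, j, hij⟩ := exists_pair_ne (Fin n)
    have hX := transpose_rotationGenerator (R := ℂ) i j
    have hvanish : ((n : ℂ) - 32) * (rotationGenerator ℂ i j ^ 6).trace = 0 :=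
      add_eq_right.mp ((trace_restrict_adM_pow_six hX).symm.trans (h _ hX))
    have hn32 : (n : ℂ) = 32 := by
      simpa [trace_rotationGenerator_pow_six hij, sub_eq_zero] using hvanish
    exact_mod_cast hn32
  · rintro rfl X hX
    simp [trace_restrict_adM_pow_six hX]

end
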